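/- Let P be a finite graded simplicial poset of rank n with positive h-vector (h_0, …, h_n), i.e. h_i ≥ 0 for all i, and let P̂ be P with a top element 1̂ adjoined. Then the Chow polynomial H_{P̂}(x) = Σ_{S ⊆ {2,…,n}, S isolated} β_{P̂}(S) · x^{|S|} · (1+x)^{n−2|S|} is real-rooted (all of its complex roots are real). -/

import Mathlib

open Polynomial

noncomputable section

/-- A real polynomial is *real-rooted* if all of its complex roots are real.
(The zero polynomial is real-rooted by convention.) -/
def RealRooted (f : Polynomial ℝ) : Prop :=
  ∀ z ∈ (f.map (algebraMap ℝ ℂ)).roots, z.im = 0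

/-- All coefficients of the polynomial are nonnegative. -/
def NonnegCoeffs (f : Polynomial ℝ) : Prop := ∀ i, 0 ≤ f.coeff i

/-- The list of real roots of `f`, with multiplicity, in weakly decreasing order. -/
def descRoots (f : Polynomial ℝ) : List ℝ := (f.roots.sort (· ≤ ·)).reverse

/-- The interlacing condition on the weakly decreasing root sequences
`α` of `f` and `β` of `g` : `β₁ ≥ α₁ ≥ β₂ ≥ α₂ ≥ …`, together with the
degree condition `deg g ∈ {deg f, deg f + 1}`. -/
def InterlacesAux (f g : Polynomial ℝ) : Prop :=
  (g.natDegree = f.natDegree ∨ g.natDegree = f.natDegree + 1) ∧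
  (∀ (i : ℕ) (hf : i < (descRoots f).length) (hg : i < (descRoots g).length),
      (descRoots f).get ⟨i, hf⟩ ≤ (descRoots g).get ⟨i, hg⟩) ∧
  (∀ (i : ℕ) (hf : i < (descRoots f).length) (hg : i + 1 < (descRoots g).length),
      (descRoots g).get ⟨i + 1, hg⟩ ≤ (descRoots f).get ⟨i, hf⟩)

/-- `f ⪯ g` : `f` interlaces `g`.  Both polynomials are required to be real-rooted;
by convention `0 ⪯ 0`, `0 ⪯ f`, `f ⪯ 0`, and any two polynomials of degree at most 1
interlace. -/
def Interlaces (f g : Polynomial ℝ) : Prop :=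
  RealRooted f ∧ RealRooted g ∧
  (f = 0 ∨ g = 0 ∨ (f.natDegree ≤ 1 ∧ g.natDegree ≤ 1) ∨ InterlacesAux f g)

/-- A finite family of real-rooted polynomials is an interlacing sequence if
`F i ⪯ F j` for all `i < j`. -/
def InterlacingSeq {n : ℕ} (F : Fin n → Polynomial ℝ) : Prop :=
  ∀ i j : Fin n, i < j → Interlaces (F i) (F j)

/-- A polynomial of degree `d` is palindromic if `coeff i = coeff (d - i)` for all `i ≤ d`. -/
def Palindromic (f : Polynomial ℝ) : Prop :=
  ∀ i ≤ f.natDegree, f.coeff i = f.coeff (f.natDegree - i)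

/-- A set `S ⊆ ℕ` is isolated if `i ∈ S` implies `i + 1 ∉ S`. -/
def IsolatedSet (S : Finset ℕ) : Prop := ∀ i ∈ S, i + 1 ∉ S

instance : DecidablePred IsolatedSet := fun S =>
  decidable_of_iff (∀ i ∈ S, i + 1 ∉ S) Iff.rfl

/-- The descent set of a permutation `w` of `{1, …, n+1}` (encoded as a permutation of
`Fin (n+1)`), as a subset of `{1, …, n}` : `Des(w) = {i ∈ {1,…,n} : w(i) > w(i+1)}`. -/
def desSet {n : ℕ} (w : Equiv.Perm (Fin (n + 1))) : Finset ℕ :=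
  (Finset.univ.filter (fun i : Fin n => w i.succ < w i.castSucc)).image
    (fun i => i.val + 1)

/-- The polynomial `p_{n,k}^{S ⊆ T}(x) = Σ x^{des(w)}`, the sum over all permutations `w`
of `{1, …, n+1}` with `w(1) = k + 1`, `Des(w)` isolated and `S ⊆ Des(w) ⊆ T`. -/
def pPoly (n k : ℕ) (S T : Finset ℕ) : Polynomial ℝ :=
  ∑ w ∈ Finset.univ.filter (fun w : Equiv.Perm (Fin (n + 1)) =>
      (w 0 : ℕ) = k ∧ IsolatedSet (desSet w) ∧ S ⊆ desSet w ∧ desSet w ⊆ T),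
    Polynomial.X ^ (desSet w).card

/-- The shifted set `S - 1 = {i - 1 : i ∈ S} ∩ {1, …, n-1}`. -/
def shiftDown (n : ℕ) (S : Finset ℕ) : Finset ℕ :=
  (S.image (fun i => i - 1)) ∩ Finset.Icc 1 (n - 1)

section Poset

variable (P : Type*) [Fintype P] [PartialOrder P] [OrderBot P]

/-- A finite poset `P` with a minimum is simplicial of rank `n` if for every maximal
element `m` the interval `[⊥, m]` is order-isomorphic to the boolean lattice of
subsets of an `n`-element set. -/
def SimplicialOfRank (n : ℕ) : Prop :=
  ∀ m : P, IsMax m → Nonempty ((Set.Icc (⊥ : P) m) ≃o Finset (Fin n))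

variable {P}

/-- `rk` is a rank function: `rk ⊥ = 0` and ranks increase by one along covers. -/
def IsRankFunction (rk : P → ℕ) : Prop :=
  rk ⊥ = 0 ∧ ∀ a b : P, a ⋖ b → rk b = rk a + 1

/-- `f_{i-1}` : the number of elements of `P` of rank `i`. -/
def fvec (rk : P → ℕ) (i : ℕ) : ℕ := (Finset.univ.filter (fun x => rk x = i)).card

/-- The generating polynomial `Σ_{i=0}^n h_i x^i = Σ_{i=0}^n f_{i-1} x^i (1-x)^{n-i}`
of the h-vector of `P`. -/
def hPoly (rk : P → ℕ) (n : ℕ) : Polynomial ℤ :=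
  ∑ i ∈ Finset.range (n + 1),
    Polynomial.C (fvec rk i : ℤ) * Polynomial.X ^ i * (1 - Polynomial.X) ^ (n - i)

/-- The h-vector entry `h_k` of `P`. -/
def hvec (rk : P → ℕ) (n k : ℕ) : ℤ := (hPoly rk n).coeff k

/-- The flag f-vector `α_{P̂}(T)` : the number of chains in `P̂ ∖ {0̂, 1̂} = P ∖ {⊥}`
whose set of ranks is exactly `T`. -/
def flagF (rk : P → ℕ) (T : Finset ℕ) : ℕ :=
  Nat.card {c : Finset P // IsChain (· ≤ ·) (c : Set P) ∧ (⊥ : P) ∉ c ∧ c.image rk = T}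

/-- The flag h-vector `β_{P̂}(S) = Σ_{T ⊆ S} (-1)^{|S ∖ T|} α_{P̂}(T)`. -/
def flagH (rk : P → ℕ) (S : Finset ℕ) : ℤ :=
  ∑ T ∈ S.powerset, (-1) ^ ((S \ T).card) * (flagF rk T : ℤ)

/-- The flag h-vector of the dual poset `P̂*` : `β_{P̂*}(S) = β_{P̂}({n+1-s : s ∈ S})`. -/
def flagHDual (rk : P → ℕ) (n : ℕ) (S : Finset ℕ) : ℤ :=
  flagH rk (S.image (fun s => n + 1 - s))

/-- The Chow polynomial
`H_{P̂}(x) = Σ_{S ⊆ {2,…,n} isolated} β_{P̂}(S) x^{|S|} (1+x)^{n-2|S|}`. -/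
def chowPoly (rk : P → ℕ) (n : ℕ) : Polynomial ℝ :=
  ∑ S ∈ (Finset.Icc 2 n).powerset.filter IsolatedSet,
    (flagH rk S : ℝ) • (Polynomial.X ^ S.card * (1 + Polynomial.X) ^ (n - 2 * S.card))

/-- The augmented Chow polynomial
`H^aug_{P̂}(x) = Σ_{S ⊆ {1,…,n} isolated} β_{P̂}(S) x^{|S|} (1+x)^{n+1-2|S|}`. -/
def chowAugPoly (rk : P → ℕ) (n : ℕ) : Polynomial ℝ :=
  ∑ S ∈ (Finset.Icc 1 n).powerset.filter IsolatedSet,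
    (flagH rk S : ℝ) • (Polynomial.X ^ S.card * (1 + Polynomial.X) ^ (n + 1 - 2 * S.card))

/-- The Chow polynomial of the dual poset `P̂*`. -/
def chowDualPoly (rk : P → ℕ) (n : ℕ) : Polynomial ℝ :=
  ∑ S ∈ (Finset.Icc 2 n).powerset.filter IsolatedSet,
    (flagHDual rk n S : ℝ) • (Polynomial.X ^ S.card * (1 + Polynomial.X) ^ (n - 2 * S.card))

/-- The augmented Chow polynomial of the dual poset `P̂*`. -/
def chowAugDualPoly (rk : P → ℕ) (n : ℕ) : Polynomial ℝ :=
  ∑ S ∈ (Finset.Icc 1 n).powerset.filter IsolatedSet,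
    (flagHDual rk n S : ℝ) • (Polynomial.X ^ S.card * (1 + Polynomial.X) ^ (n + 1 - 2 * S.card))

end Poset

end

/-!
The flag `h`-vector of `P̂` is `β(S) = ∑ₖ hₖ · bₖ(S)`, where `bₖ(S)` counts the permutations of
`{0, …, n}` with descent set `S` and last letter `n - k`. Hence `H(x) = (1 + x)ⁿ γ(x / (1 + x)²)`,
where `γ(y) = ∑ₖ hₖ g₍ₙ₋ₖ₎(y)` and `gⱼ` enumerates by descents the permutations that have last
letter `j` and an isolated descent set avoiding `1`.

If `z` is not real, then `z / (1 + z)²` lies off `(-∞, 0]`, so it is `w²` for some `w` with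
`Re w > 0`, and it remains to see that `γ(w²) ≠ 0`. Deleting the last letter of a permutation gives
a recursion for the values `gⱼ(w²)`, split according to whether the last step is an ascent or a
descent. By induction along it, `w gᵢ(w²)` makes a nonobtuse angle with `gⱼ(w²)` for all `j ≤ i`.
A nonnegative combination of the `gⱼ(w²)` in which `gₙ(w²)` has positive coefficient is then
nonzero, and the coefficient of `gₙ` is `h₀ = 1`.
-/

section Sector

open Finset
open scoped ComplexConjugate InnerProductSpace

/-- `SectorLE w a b` says that `b` makes a nonobtuse angle with `w * a`: turning from `a` to `b`
differs from turning by `arg w` by at most a right angle. The relation is additive in both arguments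
but not transitive. -/
def SectorLE (w a b : ℂ) : Prop := 0 ≤ ⟪w * a, b⟫_ℝ

namespace SectorLE

variable {ι κ : Type*} {w a b c : ℂ}

lemma zero_left (w b : ℂ) : SectorLE w 0 b := by simp [SectorLE]

lemma zero_right (w a : ℂ) : SectorLE w a 0 := by simp [SectorLE]

lemma add_left (ha : SectorLE w a c) (hb : SectorLE w b c) : SectorLE w (a + b) c := by
  simpa only [SectorLE, mul_add, inner_add_left] using add_nonneg ha hb

lemma add_right (hb : SectorLE w a b) (hc : SectorLE w a c) : SectorLE w a (b + c) := by
  simpa only [SectorLE, inner_add_right] using add_nonneg hb hc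

lemma sum_left {s : Finset ι} {f : ι → ℂ} (h : ∀ i ∈ s, SectorLE w (f i) b) :
    SectorLE w (∑ i ∈ s, f i) b :=
  sum_induction f (SectorLE w · b) (fun _ _ ↦ add_left) (zero_left w b) h

lemma sum_right {s : Finset ι} {f : ι → ℂ} (h : ∀ i ∈ s, SectorLE w a (f i)) :
    SectorLE w a (∑ i ∈ s, f i) :=
  sum_induction f (SectorLE w a ·) (fun _ _ ↦ add_right) (zero_right w a) h

lemma sum_sum {s : Finset ι} {t : Finset κ} {f : ι → ℂ} {g : κ → ℂ}
    (h : ∀ i ∈ s, ∀ j ∈ t, SectorLE w (f i) (g j)) : SectorLE w (∑ i ∈ s, f i) (∑ j ∈ t, g j) :=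
  sum_left fun i hi ↦ sum_right fun j hj ↦ h i hi j hj

lemma inner_mul_self (w a : ℂ) : ⟪w * a, a⟫_ℝ = w.re * Complex.normSq a := by
  simp only [Complex.inner, Complex.normSq_apply, map_mul, Complex.mul_re, Complex.mul_im,
    Complex.conj_re, Complex.conj_im]
  ring

lemma refl (hw : 0 ≤ w.re) (a : ℂ) : SectorLE w a a := by
  simpa only [SectorLE, inner_mul_self] using mul_nonneg hw (Complex.normSq_nonneg a)

lemma smul (h : SectorLE w a b) {r s : ℝ} (hr : 0 ≤ r) (hs : 0 ≤ s) :
    SectorLE w (r • a) (s • b) := by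
  rw [SectorLE, mul_smul_comm, real_inner_smul_left, real_inner_smul_right]
  exact mul_nonneg hr (mul_nonneg hs h)

/-- If `b` lies ahead of `a` by an angle `arg w ± π / 2`, then `w ^ 2 * a` lies ahead of `b` by the
complementary angle, which is of the same form. -/
lemma rotate (h : SectorLE w a b) : SectorLE w b (w ^ 2 * a) := by
  have inner_rotate : ⟪w * b, w ^ 2 * a⟫_ℝ = Complex.normSq w * ⟪w * a, b⟫_ℝ := by
    simp only [Complex.inner, Complex.normSq_apply, map_mul, pow_two, Complex.mul_re,
      Complex.mul_im, Complex.conj_re, Complex.conj_im]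
    ring
  rw [SectorLE, inner_rotate]
  exact mul_nonneg (Complex.normSq_nonneg w) h

lemma eq_zero_of_add_eq_zero (hw : 0 < w.re) (h : SectorLE w a b) (hab : a + b = 0) : a = 0 := by
  obtain rfl : b = -a := eq_neg_of_add_eq_zero_right hab
  rw [SectorLE, inner_neg_right, inner_mul_self, neg_nonneg] at h
  exact Complex.normSq_eq_zero.1 <|
    le_antisymm (nonpos_of_mul_nonpos_right h hw) (Complex.normSq_nonneg a)

/-- The common part of the two sums is compared with itself by reflexivity. -/
lemma sum_sum_of_overlap (hw : 0 ≤ w.re) {s t : Finset ι} {f : ι → ℂ}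
    (h : ∀ i ∈ s, ∀ j ∈ t, ¬(i ∈ t ∧ j ∈ s) → SectorLE w (f i) (f j)) :
    SectorLE w (∑ i ∈ s, f i) (∑ j ∈ t, f j) := by
  classical
  rw [← sum_inter_add_sum_sdiff s t f, ← sum_inter_add_sum_sdiff t s f, inter_comm t s]
  refine add_left (add_right (refl hw _) ?_) (add_right ?_ ?_) <;>
    refine sum_sum fun i hi j hj ↦ h i ?_ j ?_ ?_ <;>
    simp_all only [mem_inter, mem_sdiff, not_false_eq_true, and_self, and_false, false_and]

end SectorLE

/-- Each of `f 0, …, f n` is related by `SectorLE w` to itself and to all the earlier ones. -/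
def SectorAntitone (w : ℂ) (n : ℕ) (f : ℕ → ℂ) : Prop :=
  ∀ ⦃i j⦄, j ≤ i → i ≤ n → SectorLE w (f i) (f j)

namespace SectorAntitone

variable {w : ℂ} {n : ℕ} {f : ℕ → ℂ}

lemma sum_range (hw : 0 ≤ w.re) (hf : SectorAntitone w n f) :
    SectorAntitone w (n + 1) fun i ↦ ∑ k ∈ range i, f k := fun i j hji hi ↦
  SectorLE.sum_sum_of_overlap hw fun a ha b hb hab ↦ by
    simp only [mem_range] at ha hb hab
    exact hf (by omega) (by omega)

lemma sum_Ico_sum_range (hw : 0 ≤ w.re) (hf : SectorAntitone w n f) {k m : ℕ} (hm : m ≤ n + 1) :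
    SectorLE w (∑ i ∈ Ico k (n + 1), f i) (∑ i ∈ range m, f i) :=
  SectorLE.sum_sum_of_overlap hw fun a ha b hb hab ↦ by
    simp only [mem_range, mem_Ico] at ha hb hab
    exact hf (by omega) (by omega)

/-- If the sum vanishes, its last term is opposite to the sum of the others, whereas the two are
related by `SectorLE w`. -/
lemma sum_smul_ne_zero (hw : 0 < w.re) (hf : SectorAntitone w n f) (hfn : f n ≠ 0) {c : ℕ → ℝ}
    (hc : ∀ i ≤ n, 0 ≤ c i) (hcn : c n ≠ 0) : ∑ i ∈ range (n + 1), c i • f i ≠ 0 := by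
  intro h
  rw [sum_range_succ, add_comm] at h
  refine smul_ne_zero hcn hfn (SectorLE.eq_zero_of_add_eq_zero hw (SectorLE.sum_right ?_) h)
  intro i hi
  have hin : i ≤ n := (mem_range.1 hi).le
  exact (hf hin le_rfl).smul (hc n le_rfl) (hc i hin)

end SectorAntitone

mutual

/-- Generating polynomial, in `z`, of the number of descents of the permutations of `{0, …, n}` that
end with `j`, have an isolated descent set not containing `1`, and end with an ascent. The value `0`
at `n = 0`, as if a descent had just occurred, is what keeps `1` out of the descent set. -/
def ascentGen {R : Type*} [Semiring R] (z : R) : ℕ → ℕ → R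
  | 0, _ => 0
  | n + 1, j => ∑ i ∈ range j, (ascentGen z n i + descentGen z n i)

/-- The analogue of `ascentGen` for the permutations that end with a descent. -/
def descentGen {R : Type*} [Semiring R] (z : R) : ℕ → ℕ → R
  | 0, _ => 1
  | n + 1, j => z * ∑ i ∈ Ico j (n + 1), ascentGen z n i

end

lemma ascentGen_succ {R : Type*} [Semiring R] (z : R) (n j : ℕ) :
    ascentGen z (n + 1) j = ∑ i ∈ range j, (ascentGen z n i + descentGen z n i) := by
  rw [ascentGen]

lemma descentGen_succ {R : Type*} [Semiring R] (z : R) (n j : ℕ) :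
    descentGen z (n + 1) j = z * ∑ i ∈ Ico j (n + 1), ascentGen z n i := by
  rw [descentGen]

/-- The invariant carried along the recursion of `ascentGen` and `descentGen`. -/
structure IsSectorial (w : ℂ) (n : ℕ) (A D : ℕ → ℂ) : Prop where
  ascent : SectorAntitone w n A
  ascent_descent : ∀ ⦃i j⦄, i ≤ n → j ≤ n → SectorLE w (A i) (D j)
  total : SectorAntitone w n (A + D)

namespace IsSectorial

variable {w : ℂ} {n : ℕ} {A D : ℕ → ℂ}

lemma ascent_total (h : IsSectorial w n A D) {i j : ℕ} (hji : j ≤ i) (hi : i ≤ n) :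
    SectorLE w (A i) ((A + D) j) :=
  (h.ascent hji hi).add_right (h.ascent_descent hi (hji.trans hi))

lemma sum_ascent_sum_total (hw : 0 ≤ w.re) (h : IsSectorial w n A D) {k m : ℕ} (hm : m ≤ n + 1) :
    SectorLE w (∑ i ∈ Ico k (n + 1), A i) (∑ i ∈ range m, (A + D) i) := by
  simp only [Pi.add_apply, sum_add_distrib]
  refine (h.ascent.sum_Ico_sum_range hw hm).add_right (SectorLE.sum_sum fun a ha b hb ↦ ?_)
  simp only [mem_Ico, mem_range] at ha hb
  exact h.ascent_descent (by omega) (by omega)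

/-- Passing from `k` to `m` moves the block `[k, m)` from the sum of `A` to the sum of `A + D`. -/
lemma total_succ (hw : 0 ≤ w.re) (h : IsSectorial w n A D) :
    SectorAntitone w (n + 1) fun j ↦
      ∑ i ∈ range j, (A + D) i + w ^ 2 * ∑ i ∈ Ico j (n + 1), A i := by
  intro m k hkm hm
  simp only
  rw [← sum_range_add_sum_Ico (A + D) hkm, ← sum_Ico_consecutive A hkm hm]
  set totalBelow := ∑ i ∈ range k, (A + D) i
  set totalBlock := ∑ i ∈ Ico k m, (A + D) i with totalBlock_def
  set ascentBlock := ∑ i ∈ Ico k m, A i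
  set ascentAbove := ∑ i ∈ Ico m (n + 1), A i
  have block_below : SectorLE w ascentBlock totalBelow := SectorLE.sum_sum fun a ha b hb ↦ by
    simp only [mem_Ico, mem_range] at ha hb
    exact h.ascent_total (by omega) (by omega)
  have above_block : SectorLE w ascentAbove ascentBlock := SectorLE.sum_sum fun a ha b hb ↦ by
    simp only [mem_Ico] at ha hb
    exact h.ascent (by omega) (by omega)
  have total_block_below : SectorLE w totalBlock totalBelow := SectorLE.sum_sum fun a ha b hb ↦ by
    simp only [mem_Ico, mem_range] at ha hb
    exact h.total (by omega) (by omega)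
  have above_total_block : SectorLE w ascentAbove totalBlock := SectorLE.sum_sum fun a ha b hb ↦ by
    simp only [mem_Ico] at ha hb
    exact h.ascent_total (by omega) (by omega)
  have block_total_block : SectorLE w ascentBlock totalBlock := by
    simp only [totalBlock_def, Pi.add_apply, sum_add_distrib]
    refine (SectorLE.refl hw _).add_right (SectorLE.sum_sum fun a ha b hb ↦ ?_)
    simp only [mem_Ico] at ha hb
    exact h.ascent_descent (by omega) (by omega)
  rw [add_right_comm, mul_add, add_left_comm, add_comm (w ^ 2 * ascentBlock)]
  refine SectorLE.add_left (.add_right (.refl hw _) ?_) (.add_right ?_ block_total_block.rotate)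
  · exact block_below.rotate.add_left above_block.rotate.rotate
  · exact total_block_below.add_right above_total_block.rotate

lemma succ (hw : 0 ≤ w.re) (h : IsSectorial w n A D) :
    IsSectorial w (n + 1) (fun j ↦ ∑ i ∈ range j, (A + D) i)
      (fun j ↦ w ^ 2 * ∑ i ∈ Ico j (n + 1), A i) where
  ascent := h.total.sum_range hw
  ascent_descent _ _ hi _ := (h.sum_ascent_sum_total hw hi).rotate
  total := h.total_succ hw

end IsSectorial

lemma isSectorial_ascentGen_descentGen {w : ℂ} (hw : 0 ≤ w.re) (n : ℕ) :
    IsSectorial w n (ascentGen (w ^ 2) n) (descentGen (w ^ 2) n) := by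
  induction n with
  | zero =>
    have ascent_zero : ascentGen (w ^ 2) 0 = 0 := funext fun _ ↦ by rw [ascentGen, Pi.zero_apply]
    have descent_zero : descentGen (w ^ 2) 0 = 1 := funext fun _ ↦ by rw [descentGen, Pi.one_apply]
    rw [ascent_zero, descent_zero]
    refine ⟨fun _ _ _ _ ↦ .zero_left _ _, fun _ _ _ _ ↦ .zero_left _ _, fun _ _ _ _ ↦ ?_⟩
    exact .refl hw _
  | succ n ih =>
    have ascent_succ := funext (ascentGen_succ (w ^ 2) n)
    have descent_succ := funext (descentGen_succ (w ^ 2) n)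
    rw [ascent_succ, descent_succ]
    exact ih.succ hw

lemma ascentGen_add_descentGen_self_ne_zero {w : ℂ} (hw : 0 < w.re) (n : ℕ) :
    ascentGen (w ^ 2) n n + descentGen (w ^ 2) n n ≠ 0 := by
  induction n with
  | zero => rw [ascentGen, descentGen, zero_add]; exact one_ne_zero
  | succ n ih =>
    rw [ascentGen_succ, descentGen_succ, Ico_self, sum_empty, mul_zero, add_zero]
    simpa only [one_smul, Pi.add_apply] using
      (isSectorial_ascentGen_descentGen hw.le n).total.sum_smul_ne_zero hw ih (c := fun _ ↦ 1)
        (fun _ _ ↦ zero_le_one) one_ne_zero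

theorem sum_smul_ascentGen_add_descentGen_ne_zero {w : ℂ} (hw : 0 < w.re) {n : ℕ} {c : ℕ → ℝ}
    (hc : ∀ i ≤ n, 0 ≤ c i) (hcn : c n ≠ 0) :
    ∑ i ∈ range (n + 1), c i • (ascentGen (w ^ 2) n i + descentGen (w ^ 2) n i) ≠ 0 :=
  (isSectorial_ascentGen_descentGen hw.le n).total.sum_smul_ne_zero hw
    (ascentGen_add_descentGen_self_ne_zero hw n) hc hcn

end Sector

section Descents

open Finset

/-- The number of permutations of `{0, …, n}` that end with `j` and have descent set `S`, by
recursion on the length. Removing the last letter and standardizing leaves a permutation of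
`{0, …, n - 1}` whose last letter is at least `j` or less than `j` according as the last step was a
descent or an ascent. -/
def descentCount : ℕ → Finset ℕ → ℕ → ℕ
  | 0, _, _ => 1
  | n + 1, S, j => ∑ i ∈ if n + 1 ∈ S then Ico j (n + 1) else range j, descentCount n S i

/-- The number of permutations of `{0, …, n}` that end with `j` and have descent set contained in
`T`. -/
def descentSubsetCount : ℕ → Finset ℕ → ℕ → ℕ
  | 0, _, _ => 1
  | n + 1, T, j => ∑ i ∈ range (if n + 1 ∈ T then n + 1 else j), descentSubsetCount n T i

lemma descentCount_insert_of_lt {n m : ℕ} (h : n < m) (S : Finset ℕ) (j : ℕ) :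
    descentCount n (insert m S) j = descentCount n S j := by
  induction n generalizing j with
  | zero => rfl
  | succ n ih =>
    simp only [descentCount, mem_insert, h.ne, false_or, ih ((Nat.lt_succ_self n).trans h)]

lemma descentSubsetCount_insert_of_lt {n m : ℕ} (h : n < m) (T : Finset ℕ) (j : ℕ) :
    descentSubsetCount n (insert m T) j = descentSubsetCount n T j := by
  induction n generalizing j with
  | zero => rfl
  | succ n ih =>
    simp only [descentSubsetCount, mem_insert, h.ne, false_or, ih ((Nat.lt_succ_self n).trans h)]

lemma descentCount_succ_of_notMem {n : ℕ} {S : Finset ℕ} (h : n + 1 ∉ S) (j : ℕ) :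
    descentCount (n + 1) S j = ∑ i ∈ range j, descentCount n S i := by
  rw [descentCount, if_neg h]

lemma descentCount_succ_insert (n : ℕ) (S : Finset ℕ) (j : ℕ) :
    descentCount (n + 1) (insert (n + 1) S) j = ∑ i ∈ Ico j (n + 1), descentCount n S i := by
  simp only [descentCount, mem_insert_self, if_true, descentCount_insert_of_lt n.lt_succ_self]

lemma descentSubsetCount_succ_of_notMem {n : ℕ} {T : Finset ℕ} (h : n + 1 ∉ T) (j : ℕ) :
    descentSubsetCount (n + 1) T j = ∑ i ∈ range j, descentSubsetCount n T i := by
  rw [descentSubsetCount, if_neg h]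

lemma descentSubsetCount_succ_insert (n : ℕ) (T : Finset ℕ) (j : ℕ) :
    descentSubsetCount (n + 1) (insert (n + 1) T) j =
      ∑ i ∈ range (n + 1), descentSubsetCount n T i := by
  simp only [descentSubsetCount, mem_insert_self, if_true,
    descentSubsetCount_insert_of_lt n.lt_succ_self]

lemma subset_Icc_of_subset_Icc_succ {a n : ℕ} {S : Finset ℕ} (hS : S ⊆ Icc a (n + 1))
    (hn : n + 1 ∉ S) : S ⊆ Icc a n := by
  intro x hx
  have hxS := mem_Icc.1 (hS hx)
  have hne : x ≠ n + 1 := ne_of_mem_of_not_mem hx hn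
  exact mem_Icc.2 ⟨hxS.1, by omega⟩

theorem sum_descentCount_powerset {n : ℕ} {T : Finset ℕ} (hT : T ⊆ Icc 1 n) {j : ℕ} (hj : j ≤ n) :
    ∑ S ∈ T.powerset, descentCount n S j = descentSubsetCount n T j := by
  induction n generalizing T j with
  | zero =>
    obtain rfl : T = ∅ := by simpa using hT
    rw [powerset_empty, sum_singleton, descentCount, descentSubsetCount]
  | succ n ih =>
    by_cases hn : n + 1 ∈ T
    · obtain ⟨U, hU, rfl⟩ : ∃ U, n + 1 ∉ U ∧ insert (n + 1) U = T :=
        ⟨T.erase (n + 1), notMem_erase _ _, insert_erase hn⟩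
      have hUn : U ⊆ Icc 1 n := subset_Icc_of_subset_Icc_succ ((subset_insert _ _).trans hT) hU
      rw [sum_powerset_insert hU, descentSubsetCount_succ_insert, ← sum_add_distrib]
      calc ∑ S ∈ U.powerset, (descentCount (n + 1) S j + descentCount (n + 1) (insert (n + 1) S) j)
          = ∑ S ∈ U.powerset, ∑ i ∈ range (n + 1), descentCount n S i := by
            refine sum_congr rfl fun S hS ↦ ?_
            rw [descentCount_succ_of_notMem fun h ↦ hU (mem_powerset.1 hS h),
              descentCount_succ_insert, sum_range_add_sum_Ico _ hj]
        _ = ∑ i ∈ range (n + 1), descentSubsetCount n U i := by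
            rw [sum_comm]
            exact sum_congr rfl fun i hi ↦ ih hUn (mem_range_succ_iff.1 hi)
    · rw [descentSubsetCount_succ_of_notMem hn]
      calc ∑ S ∈ T.powerset, descentCount (n + 1) S j
          = ∑ S ∈ T.powerset, ∑ i ∈ range j, descentCount n S i :=
            sum_congr rfl fun S hS ↦
              descentCount_succ_of_notMem (fun h ↦ hn (mem_powerset.1 hS h)) j
        _ = ∑ i ∈ range j, descentSubsetCount n T i := by
            rw [sum_comm]
            refine sum_congr rfl fun i hi ↦ ih (subset_Icc_of_subset_Icc_succ hT hn) ?_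
            exact Nat.lt_succ_iff.1 ((mem_range.1 hi).trans_le hj)

lemma sum_range_choose_eq_choose_succ (j k : ℕ) : ∑ i ∈ range j, i.choose k = j.choose (k + 1) := by
  induction j with
  | zero => rw [range_zero, sum_empty, Nat.choose_zero_succ]
  | succ j ih => rw [sum_range_succ, ih, Nat.choose_succ_succ', add_comm]

/-- The multinomial coefficient `∏ᵢ (tᵢ₊₁ choose tᵢ)` of `T = {t₁ < t₂ < ⋯}`, which is the number of
flags with rank set `T` ending at a given element of rank `max T` in a Boolean lattice, and also the
number of permutations of `max T` letters with descent set contained in `T`. -/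
def flagMultinomial (T : Finset ℕ) : ℕ := descentSubsetCount (T.sup id) T (T.sup id)

lemma flagMultinomial_empty : flagMultinomial ∅ = 1 := by
  rw [flagMultinomial, sup_empty, Nat.bot_eq_zero, descentSubsetCount]

/-- After position `max T` the letters increase, so they are determined by their set. -/
theorem descentSubsetCount_eq_choose_mul {n : ℕ} {T : Finset ℕ} (hn : T.sup id ≤ n) (j : ℕ) :
    descentSubsetCount n T j = j.choose (n - T.sup id) * flagMultinomial T := by
  induction n, hn using Nat.le_induction generalizing j with
  | base =>
    rw [Nat.sub_self, Nat.choose_zero_right, one_mul, flagMultinomial]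
    rcases T.eq_empty_or_nonempty with rfl | hT
    · rw [sup_empty, Nat.bot_eq_zero, descentSubsetCount, descentSubsetCount]
    · obtain ⟨t, ht, hsup⟩ := exists_mem_eq_sup T hT id
      rw [hsup, id]
      cases t with
      | zero => rw [descentSubsetCount, descentSubsetCount]
      | succ t => rw [descentSubsetCount, descentSubsetCount, if_pos ht, if_pos ht]
  | succ n hn ih =>
    have hnT : n + 1 ∉ T := fun h ↦ by
      have : n + 1 ≤ T.sup id := le_sup (f := id) h
      omega
    rw [descentSubsetCount_succ_of_notMem hnT, sum_congr rfl fun i _ ↦ ih i, ← sum_mul,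
      sum_range_choose_eq_choose_succ, Nat.sub_add_comm hn]

lemma sup_id_insert_of_lt {s : ℕ} {T : Finset ℕ} (hs : T.sup id < s) : (insert s T).sup id = s := by
  rw [sup_insert, id, sup_eq_left]
  exact hs.le

lemma flagMultinomial_insert {s : ℕ} {T : Finset ℕ} (hs : T.sup id < s) :
    flagMultinomial (insert s T) = s.choose (T.sup id) * flagMultinomial T := by
  obtain ⟨r, rfl⟩ : ∃ r, s = r + 1 := Nat.exists_eq_succ_of_ne_zero hs.ne_bot
  have hr : T.sup id ≤ r := Nat.lt_succ_iff.1 hs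
  rw [flagMultinomial, sup_id_insert_of_lt hs, descentSubsetCount_succ_insert,
    sum_congr rfl fun i _ ↦ descentSubsetCount_eq_choose_mul hr i, ← sum_mul,
    sum_range_choose_eq_choose_succ, ← Nat.sub_add_comm hr, Nat.choose_symm hs.le]

end Descents

section IsolatedSets

open Finset

lemma IsolatedSet.two_mul_card_le {S : Finset ℕ} (hS : IsolatedSet S) {a b : ℕ}
    (hab : S ⊆ Icc a b) : 2 * #S ≤ b + 2 - a := by
  have disjoint_succ : Disjoint S (S.image (· + 1)) := by
    rw [disjoint_right, forall_mem_image]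
    exact hS
  have union_subset : S ∪ S.image (· + 1) ⊆ Icc a (b + 1) := by
    refine union_subset (hab.trans (Icc_subset_Icc_right b.le_succ)) ?_
    simp only [subset_iff, forall_mem_image, mem_Icc] at hab ⊢
    exact fun x hx ↦ ⟨(hab hx).1.trans x.le_succ, Nat.succ_le_succ (hab hx).2⟩
  calc 2 * #S = #(S ∪ S.image (· + 1)) := by
        rw [card_union_of_disjoint disjoint_succ,
          card_image_of_injective _ (add_left_injective 1), two_mul]
    _ ≤ b + 2 - a := (card_le_card union_subset).trans_eq (Nat.card_Icc _ _)

lemma isolatedSet_empty : IsolatedSet ∅ := fun _ h ↦ absurd h (notMem_empty _)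

lemma isolatedSet_insert_succ_iff {n : ℕ} {S : Finset ℕ} (hS : ∀ i ∈ S, i ≤ n) :
    IsolatedSet (insert (n + 1) S) ↔ IsolatedSet S ∧ n ∉ S := by
  refine ⟨fun h ↦ ⟨fun i hi hi' ↦ h i (mem_insert_of_mem hi) (mem_insert_of_mem hi'), fun hn ↦
    h n (mem_insert_of_mem hn) (mem_insert_self _ _)⟩, fun ⟨h, hn⟩ i hi hi' ↦ ?_⟩
  obtain rfl | hiS := mem_insert.1 hi
  · obtain hi' | hi' := mem_insert.1 hi'
    · exact Nat.succ_ne_self _ hi'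
    · exact absurd (hS _ hi') (by omega)
  · obtain hi' | hi' := mem_insert.1 hi'
    · exact hn (Nat.succ_injective hi' ▸ hiS)
    · exact h i hiS hi'

/-- Split according to whether `n + 2` belongs to the set; if it does, then `n + 1` does not. -/
lemma sum_isolatedSet_powerset_Icc {M : Type*} [AddCommMonoid M] {a n : ℕ} (ha : a ≤ n + 2)
    (f : Finset ℕ → M) :
    ∑ S ∈ (Icc a (n + 2)).powerset with IsolatedSet S, f S =
      ∑ S ∈ (Icc a (n + 1)).powerset with IsolatedSet S, f S +
        ∑ S ∈ (Icc a n).powerset with IsolatedSet S, f (insert (n + 2) S) := by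
  have isolated_insert : (Icc a (n + 1)).powerset.filter (fun S ↦ IsolatedSet (insert (n + 2) S)) =
      (Icc a n).powerset.filter IsolatedSet := by
    ext S
    simp only [mem_filter, mem_powerset]
    refine ⟨fun ⟨hS, h⟩ ↦ ?_, fun ⟨hS, h⟩ ↦ ?_⟩
    · obtain ⟨h, hn⟩ := (isolatedSet_insert_succ_iff fun i hi ↦ (mem_Icc.1 (hS hi)).2).1 h
      exact ⟨subset_Icc_of_subset_Icc_succ hS hn, h⟩
    · have le_of_mem : ∀ i ∈ S, i ≤ n := fun i hi ↦ (mem_Icc.1 (hS hi)).2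
      refine ⟨hS.trans (Icc_subset_Icc_right n.le_succ), (isolatedSet_insert_succ_iff fun i hi ↦
        (le_of_mem i hi).trans n.le_succ).2 ⟨h, fun hn ↦ absurd (le_of_mem _ hn) (by omega)⟩⟩
  have insert_top : Icc a (n + 2) = insert (n + 2) (Icc a (n + 1)) :=
    (insert_Icc_right_eq_Icc_add_one ha).symm
  have top_notMem : n + 2 ∉ Icc a (n + 1) := by simp only [mem_Icc]; omega
  rw [insert_top, sum_filter, sum_powerset_insert top_notMem, ← sum_filter, ← sum_filter,
    isolated_insert]

/-- A descent at `n + 2` is preceded by an ascent, which accounts for the inner sum over `l`. -/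
lemma sum_isolatedSet_descentCount_add_two {R : Type*} [CommSemiring R] (z : R) (n j : ℕ) :
    ∑ S ∈ (Icc 2 (n + 2)).powerset with IsolatedSet S, descentCount (n + 2) S j * z ^ #S =
      ∑ i ∈ range j,
          ∑ S ∈ (Icc 2 (n + 1)).powerset with IsolatedSet S, descentCount (n + 1) S i * z ^ #S +
        z * ∑ i ∈ Ico j (n + 2), ∑ l ∈ range i,
          ∑ S ∈ (Icc 2 n).powerset with IsolatedSet S, descentCount n S l * z ^ #S := by
  have notMem_of_lt {m k : ℕ} (hmk : m < k) {S : Finset ℕ}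
      (hS : S ∈ (Icc 2 m).powerset.filter IsolatedSet) : k ∉ S := fun hk ↦
    hmk.not_ge (mem_Icc.1 (mem_powerset.1 (mem_filter.1 hS).1 hk)).2
  rw [sum_isolatedSet_powerset_Icc (by omega)]
  congr 1
  · rw [sum_comm]
    refine sum_congr rfl fun S hS ↦ ?_
    rw [descentCount_succ_of_notMem (notMem_of_lt (by omega) hS), Nat.cast_sum, sum_mul]
  · rw [sum_congr rfl fun i _ ↦ sum_comm, sum_comm, mul_sum]
    refine sum_congr rfl fun S hS ↦ ?_
    rw [descentCount_succ_insert, card_insert_of_notMem (notMem_of_lt (by omega) hS)]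
    simp only [descentCount_succ_of_notMem (notMem_of_lt (Nat.lt_succ_self n) hS), Nat.cast_sum,
      sum_mul, mul_sum]
    exact sum_congr rfl fun i _ ↦ sum_congr rfl fun l _ ↦ by ring

theorem sum_isolatedSet_descentCount {R : Type*} [CommSemiring R] (z : R) (n j : ℕ) :
    ∑ S ∈ (Icc 2 n).powerset with IsolatedSet S, descentCount n S j * z ^ #S =
      ascentGen z n j + descentGen z n j := by
  have sum_empty_range {n : ℕ} (hn : n < 2) (f : Finset ℕ → R) :
      ∑ S ∈ (Icc 2 n).powerset with IsolatedSet S, f S = f ∅ := by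
    rw [Icc_eq_empty (by omega), powerset_empty, filter_singleton, if_pos isolatedSet_empty,
      sum_singleton]
  induction n using Nat.twoStepInduction generalizing j with
  | zero =>
    rw [sum_empty_range (by omega)]
    simp [descentCount, ascentGen, descentGen]
  | one =>
    rw [sum_empty_range (by omega)]
    simp [descentCount, ascentGen, descentGen]
  | more n ih ih' =>
    rw [sum_isolatedSet_descentCount_add_two, ascentGen_succ, descentGen_succ]
    simp only [ih, ih', ascentGen_succ]

end IsolatedSets

section MoebiusInversion

open Finset

theorem sum_powerset_neg_one_pow_mul_eq {α R : Type*} [DecidableEq α] [CommRing R]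
    {f g : Finset α → R} {S : Finset α} (h : ∀ T ⊆ S, f T = ∑ U ∈ T.powerset, g U) :
    ∑ T ∈ S.powerset, (-1) ^ #(S \ T) * f T = g S := by
  induction S using Finset.induction_on generalizing f g with
  | empty => simpa using h ∅ Subset.rfl
  | insert a S ha ih =>
    have difference_eq_sum : ∀ T ⊆ S,
        f (insert a T) - f T = ∑ U ∈ T.powerset, g (insert a U) := fun T hT ↦ by
      rw [h _ (insert_subset_insert a hT), h _ (hT.trans (subset_insert a S)),
        sum_powerset_insert fun haT ↦ ha (hT haT), add_sub_cancel_left]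
    rw [← ih difference_eq_sum, sum_powerset_insert ha, ← sum_add_distrib]
    refine sum_congr rfl fun T hT ↦ ?_
    have haT : a ∉ T := fun haT ↦ ha (mem_powerset.1 hT haT)
    rw [insert_sdiff_of_notMem _ haT, insert_sdiff_insert, sdiff_insert_of_notMem ha,
      card_insert_of_notMem fun haST ↦ ha (mem_sdiff.1 haST).1]
    ring

end MoebiusInversion

section HVector

open Finset

lemma reflect_pow {R : Type*} [Semiring R] {p : R[X]} {N : ℕ} (hp : p.natDegree ≤ N) (m : ℕ) :
    (p ^ m).reflect (m * N) = p.reflect N ^ m := by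
  induction m with
  | zero => simp only [pow_zero, zero_mul, reflect_one]
  | succ m ih =>
    rw [pow_succ, pow_succ, Nat.succ_mul, reflect_mul _ _ (natDegree_pow_le_of_le m hp) hp, ih]

/-- The coefficients of `∑ k, pₖ (1 + X) ^ (n - k)`, the reflection of `p` translated by `1`. -/
lemma sum_coeff_mul_choose_eq_coeff_taylor_reflect {R : Type*} [CommSemiring R] {p : R[X]} {n : ℕ}
    (hp : p.natDegree ≤ n) (m : ℕ) :
    ∑ k ∈ range (n + 1), p.coeff k * (n - k).choose m = (taylor 1 (p.reflect n)).coeff m := by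
  have natDegree_reflect_lt : (p.reflect n).natDegree < n + 1 :=
    Nat.lt_succ_of_le (natDegree_reflect_le.trans (max_le le_rfl hp))
  rw [taylor_apply, comp, eval₂_eq_sum_range' _ natDegree_reflect_lt, finsetSum_coeff,
    ← sum_range_reflect]
  refine sum_congr rfl fun k hk ↦ ?_
  have hkn : k ≤ n := mem_range_succ_iff.1 hk
  rw [add_tsub_cancel_right, coeff_C_mul, coeff_X_add_C_pow, one_pow, one_mul, coeff_reflect,
    revAt_le hkn, Nat.sub_sub_self hkn]

lemma natDegree_X_pow_mul_one_sub_X_pow_le {R : Type*} [CommRing R] (i m : ℕ) :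
    (X ^ i * (1 - X) ^ m : R[X]).natDegree ≤ i + m := by
  compute_degree

lemma taylor_reflect_X_pow_mul_one_sub_X_pow {R : Type*} [CommRing R] (i m : ℕ) :
    taylor 1 ((X ^ i * (1 - X) ^ m : R[X]).reflect (i + m)) = X ^ m := by
  have natDegree_one_sub_X_le : (1 - X : R[X]).natDegree ≤ 1 := by compute_degree
  have reflect_one_sub_X_pow : ((1 - X : R[X]) ^ m).reflect m = (X - 1) ^ m := by
    simpa only [mul_one, reflect_sub, reflect_one, pow_one, reflect_one_X] using
      reflect_pow natDegree_one_sub_X_le m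
  rw [reflect_mul _ _ (natDegree_X_pow_le i) ?_, reflect_one_sub_X_pow, reflect_monomial,
    revAt_le le_rfl, Nat.sub_self, pow_zero, one_mul, taylor_pow, map_sub, taylor_X, taylor_one,
    add_sub_cancel_right]
  simpa only [mul_one] using natDegree_pow_le_of_le m natDegree_one_sub_X_le

theorem sum_coeff_mul_choose_sub {R : Type*} [CommRing R] (f : ℕ → R) {n t : ℕ} (ht : t ≤ n) :
    ∑ k ∈ range (n + 1),
        (∑ i ∈ range (n + 1), C (f i) * X ^ i * (1 - X) ^ (n - i)).coeff k *
          ((n - k).choose (n - t) : R) =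
      f t := by
  have sum_coeff (i : ℕ) (hi : i ∈ range (n + 1)) :
      ∑ k ∈ range (n + 1), (X ^ i * (1 - X) ^ (n - i) : R[X]).coeff k * (n - k).choose (n - t) =
        if t = i then 1 else 0 := by
    have hin : i ≤ n := mem_range_succ_iff.1 hi
    obtain ⟨m, rfl⟩ := Nat.exists_eq_add_of_le hin
    rw [Nat.add_sub_cancel_left, sum_coeff_mul_choose_eq_coeff_taylor_reflect
      (natDegree_X_pow_mul_one_sub_X_pow_le i m), taylor_reflect_X_pow_mul_one_sub_X_pow,
      coeff_X_pow]
    exact if_congr (by omega) rfl rfl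
  simp only [finsetSum_coeff, mul_assoc, coeff_C_mul, sum_mul]
  rw [sum_comm]
  simp only [← mul_sum]
  rw [sum_congr rfl fun i hi ↦ by rw [sum_coeff i hi], sum_mul_boole,
    if_pos (mem_range_succ_iff.2 ht)]

variable {P : Type*} [Fintype P] {rk : P → ℕ} {n : ℕ}

theorem fvec_eq_sum_hvec_mul_choose {t : ℕ} (ht : t ≤ n) :
    (fvec rk t : ℤ) = ∑ k ∈ range (n + 1), hvec rk n k * (n - k).choose (n - t) :=
  (sum_coeff_mul_choose_sub (fun i ↦ (fvec rk i : ℤ)) ht).symm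

lemma hvec_zero : hvec rk n 0 = fvec rk 0 := by
  rw [fvec_eq_sum_hvec_mul_choose n.zero_le, sum_range_succ', sum_eq_zero, zero_add, Nat.sub_zero,
    Nat.choose_self, Nat.cast_one, mul_one]
  intro k hk
  rw [Nat.choose_eq_zero_of_lt (by have := mem_range.1 hk; omega), Nat.cast_zero, mul_zero]

end HVector

section RankFunction

open Finset

variable {P : Type*} [PartialOrder P] [OrderBot P] {rk : P → ℕ} {n : ℕ}

lemma IsRankFunction.rk_symm_apply (hrk : IsRankFunction rk) {m : P}
    (e : Set.Icc (⊥ : P) m ≃o Finset (Fin n)) (A : Finset (Fin n)) : rk (e.symm A) = #A := by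
  induction A using Finset.induction_on with
  | empty =>
    have symm_empty : (e.symm ∅ : P) = ⊥ :=
      le_bot_iff.1 ((e.symm_apply_le (x := ⟨⊥, le_rfl, bot_le⟩)).2 (empty_subset _))
    rw [symm_empty, hrk.1, card_empty]
  | insert a A ha ih =>
    have covBy_in_interval : e.symm A ⋖ e.symm (insert a A) :=
      (apply_covBy_apply_iff e.symm).2 (covBy_insert ha)
    have range_ordConnected :
        (Set.range (OrderEmbedding.subtype (· ∈ Set.Icc (⊥ : P) m))).OrdConnected := by
      simpa only [OrderEmbedding.coe_subtype, Subtype.range_coe_subtype] using!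
        Set.ordConnected_Icc
    have covBy : (e.symm A : P) ⋖ e.symm (insert a A) :=
      (range_ordConnected.apply_covBy_apply_iff _).2 covBy_in_interval
    rw [hrk.2 _ _ covBy, ih, card_insert_of_notMem ha]

end RankFunction

section BooleanRankCounts

open Finset

variable {P : Type*} [Fintype P] [PartialOrder P] {rk : P → ℕ}

open scoped Classical in
/-- Below every element `y` there are as many elements of each rank as in a Boolean lattice of rank
`rk y`. This is all that the flag enumeration of a simplicial poset uses. -/
def HasBooleanRankCounts (rk : P → ℕ) : Prop :=
  ∀ y t, #{z | z ≤ y ∧ rk z = t} = (rk y).choose t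

namespace HasBooleanRankCounts

lemma strictMono (h : HasBooleanRankCounts rk) : StrictMono rk := by
  classical
  intro x y hxy
  have choose_pos : 0 < (rk y).choose (rk x) := by
    rw [← h y (rk x)]
    exact card_pos.2 ⟨x, mem_filter.2 ⟨mem_univ x, hxy.le, rfl⟩⟩
  refine (Nat.choose_ne_zero_iff.1 choose_pos.ne').lt_of_ne fun hrk ↦ hxy.ne ?_
  have card_eq_one := (h y (rk y)).trans (Nat.choose_self _)
  exact card_le_one.1 card_eq_one.le x (mem_filter.2 ⟨mem_univ x, hxy.le, hrk⟩)
    y (mem_filter.2 ⟨mem_univ y, le_rfl, rfl⟩)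

open scoped Classical in
lemma card_lt (h : HasBooleanRankCounts rk) {y : P} {t : ℕ} (ht : t < rk y) :
    #{z | z < y ∧ rk z = t} = (rk y).choose t := by
  rw [← h y t]
  refine congrArg card (filter_congr fun z _ ↦ and_congr_left fun hz ↦ ?_)
  exact ⟨le_of_lt, fun hzy ↦ hzy.lt_of_ne fun hzy ↦ by subst hzy; exact ht.ne' hz⟩

variable [OrderBot P]

lemma map_bot (h : HasBooleanRankCounts rk) : rk ⊥ = 0 := by
  classical
  have card_pos : 0 < #{z | z ≤ (⊥ : P) ∧ rk z = 0} := by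
    rw [h, Nat.choose_zero_right]; exact Nat.one_pos
  obtain ⟨z, hz⟩ := Finset.card_pos.1 card_pos
  obtain ⟨hz_le, hz_rk⟩ := (mem_filter.1 hz).2
  rwa [le_bot_iff.1 hz_le] at hz_rk

lemma rk_eq_zero_iff (h : HasBooleanRankCounts rk) {y : P} : rk y = 0 ↔ y = ⊥ := by
  refine ⟨fun hy ↦ not_bot_lt_iff.1 fun hlt ↦ ?_, fun hy ↦ hy ▸ h.map_bot⟩
  exact (hy ▸ h.strictMono hlt).not_ge (Nat.zero_le _)

lemma fvec_zero (h : HasBooleanRankCounts rk) : fvec rk 0 = 1 := by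
  refine card_eq_one.2 ⟨⊥, ?_⟩
  ext y
  simp only [h.rk_eq_zero_iff, mem_filter, mem_univ, true_and, mem_singleton]

end HasBooleanRankCounts

variable [OrderBot P] {n : ℕ}

theorem hasBooleanRankCounts_of_simplicialOfRank (hrk : IsRankFunction rk)
    (hP : SimplicialOfRank P n) : HasBooleanRankCounts rk := by
  classical
  intro y t
  obtain ⟨m, hym, hm⟩ := Finite.exists_le_maximal (p := fun _ : P ↦ True) (a := y) trivial
  obtain ⟨e⟩ := hP m fun _ hmb ↦ hm.2 trivial hmb
  have rk_eq_card (z : Set.Icc (⊥ : P) m) : rk z = #(e z) := by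
    rw [← hrk.rk_symm_apply e, e.symm_apply_apply]
  rw [rk_eq_card ⟨y, bot_le, hym⟩, ← card_powersetCard]
  symm
  refine card_bij (fun A _ ↦ (e.symm A : P)) (fun A hA ↦ ?_)
    (fun A _ B _ hAB ↦ e.symm.injective (Subtype.ext hAB)) fun z hz ↦ ?_
  · obtain ⟨hAy, hAt⟩ := mem_powersetCard.1 hA
    have le_y : e.symm A ≤ ⟨y, bot_le, hym⟩ := e.symm_apply_le.2 hAy
    exact mem_filter.2 ⟨mem_univ _, le_y, (hrk.rk_symm_apply e A).trans hAt⟩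
  · obtain ⟨hzy, hzt⟩ := (mem_filter.1 hz).2
    have hzm : z ∈ Set.Icc ⊥ m := ⟨bot_le, hzy.trans hym⟩
    have le_y : e ⟨z, hzm⟩ ≤ e ⟨y, bot_le, hym⟩ := e.monotone hzy
    refine ⟨e ⟨z, hzm⟩, mem_powersetCard.2 ⟨le_y, (rk_eq_card ⟨z, hzm⟩).symm.trans hzt⟩, ?_⟩
    rw [e.symm_apply_apply]

end BooleanRankCounts

section RankChains

open Finset

variable {P : Type*} [Fintype P] [PartialOrder P] {rk : P → ℕ} {U : Set P} {c : Finset P}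
  {T : Finset ℕ} {s : ℕ} {y : P}

open scoped Classical in
/-- The chains contained in `U` whose set of ranks is `T`. -/
noncomputable def rankChains (rk : P → ℕ) (U : Set P) (T : Finset ℕ) : Finset (Finset P) :=
  {c | IsChain (· ≤ ·) (c : Set P) ∧ (c : Set P) ⊆ U ∧ c.image rk = T}

lemma mem_rankChains :
    c ∈ rankChains rk U T ↔
      IsChain (· ≤ ·) (c : Set P) ∧ (c : Set P) ⊆ U ∧ c.image rk = T := by
  classical
  simp only [rankChains, mem_filter, mem_univ, true_and]

lemma rankChains_empty : rankChains rk U ∅ = {∅} := by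
  ext c
  rw [mem_rankChains, image_eq_empty, mem_singleton]
  refine ⟨fun h ↦ h.2.2, ?_⟩
  rintro rfl
  exact ⟨by simp, by simp, rfl⟩

lemma notMem_of_mem_rankChains_Iio (hc : c ∈ rankChains rk (Set.Iio y) T) : y ∉ c :=
  fun hy ↦ lt_irrefl y ((mem_rankChains.1 hc).2.1 hy)

lemma insert_mem_rankChains [DecidableEq P] (hU : IsLowerSet U) (hy : y ∈ U)
    (hc : c ∈ rankChains rk (Set.Iio y) T) : insert y c ∈ rankChains rk U (insert (rk y) T) := by
  obtain ⟨chain, lt_y, rank⟩ := mem_rankChains.1 hc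
  refine mem_rankChains.2 ⟨?_, ?_, by rw [image_insert, rank]⟩ <;> rw [coe_insert]
  · exact chain.insert fun z hz _ ↦ Or.inr (lt_y hz).le
  · exact Set.insert_subset hy fun z hz ↦ hU (lt_y hz).le hy

lemma erase_mem_rankChains_Iio [DecidableEq P] (hrk : StrictMono rk) (hT : ∀ t ∈ T, t < rk y)
    (hc : c ∈ rankChains rk U (insert (rk y) T)) (hy : y ∈ c) :
    c.erase y ∈ rankChains rk (Set.Iio y) T := by
  obtain ⟨chain, -, rank⟩ := mem_rankChains.1 hc
  have rk_mem (z) (hz : z ∈ c) : rk z = rk y ∨ rk z ∈ T :=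
    mem_insert.1 (rank ▸ mem_image_of_mem rk hz)
  have lt_y (z) (hz : z ∈ c.erase y) : z < y := by
    obtain ⟨hzy, hzc⟩ := mem_erase.1 hz
    refine ((chain hzc hy hzy).resolve_right fun hyz ↦ ?_).lt_of_ne hzy
    have rk_lt := hrk (hyz.lt_of_ne' hzy)
    exact (rk_mem z hzc).elim rk_lt.ne' fun hzT ↦ (hT _ hzT).asymm rk_lt
  refine mem_rankChains.2 ⟨chain.mono (coe_subset.2 (erase_subset y c)), lt_y, ?_⟩
  ext t
  rw [mem_image]
  constructor
  · rintro ⟨z, hz, rfl⟩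
    exact (rk_mem z (mem_of_mem_erase hz)).resolve_left (hrk (lt_y z hz)).ne
  · intro ht
    obtain ⟨z, hz, rfl⟩ := mem_image.1 (rank ▸ mem_insert_of_mem ht : t ∈ c.image rk)
    exact ⟨z, mem_erase.2 ⟨fun hzy ↦ (hT _ ht).ne (congrArg rk hzy), hz⟩, rfl⟩

open scoped Classical in
theorem card_rankChains_insert (hrk : StrictMono rk) (hU : IsLowerSet U) (hT : ∀ t ∈ T, t < s) :
    #(rankChains rk U (insert s T)) =
      ∑ y with y ∈ U ∧ rk y = s, #(rankChains rk (Set.Iio y) T) := by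
  rw [← card_sigma]
  symm
  refine card_bij (fun p _ ↦ insert p.1 p.2) ?_ ?_ fun c hc ↦ ?_
  · rintro ⟨y, c⟩ h
    obtain ⟨hy, hc⟩ := mem_sigma.1 h
    obtain ⟨hyU, rfl⟩ := (mem_filter.1 hy).2
    exact insert_mem_rankChains hU hyU hc
  · rintro ⟨y, c⟩ h ⟨y', c'⟩ h' heq
    obtain ⟨hy, hc : c ∈ rankChains rk (Set.Iio y) T⟩ := mem_sigma.1 h
    obtain ⟨hy', hc' : c' ∈ rankChains rk (Set.Iio y') T⟩ := mem_sigma.1 h'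
    replace heq : insert y c = insert y' c' := heq
    have rk_eq : rk y = rk y' := (mem_filter.1 hy).2.2.trans (mem_filter.1 hy').2.2.symm
    obtain rfl : y = y' := by
      have y_mem : y ∈ insert y' c' := heq ▸ mem_insert_self y c
      exact (mem_insert.1 y_mem).resolve_right fun hyc' ↦
        (hrk ((mem_rankChains.1 hc').2.1 hyc')).ne rk_eq
    obtain rfl : c = c' := by
      rw [← erase_insert (notMem_of_mem_rankChains_Iio hc), heq,
        erase_insert (notMem_of_mem_rankChains_Iio hc')]
    rfl
  · obtain ⟨-, subset, rank⟩ := mem_rankChains.1 hc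
    obtain ⟨y, hyc, rfl⟩ := mem_image.1 (rank ▸ mem_insert_self s T : s ∈ c.image rk)
    exact ⟨⟨y, c.erase y⟩, mem_sigma.2 ⟨mem_filter.2 ⟨mem_univ y, subset hyc, rfl⟩,
      erase_mem_rankChains_Iio hrk hT hc hyc⟩, insert_erase hyc⟩

variable [OrderBot P]

open scoped Classical in
theorem card_rankChains (h : HasBooleanRankCounts rk) (hU : IsLowerSet U) (hne : U.Nonempty)
    (hT : 0 ∉ T) :
    #(rankChains rk U T) = #{y | y ∈ U ∧ rk y = T.sup id} * flagMultinomial T := by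
  induction T using Finset.induction_on_max generalizing U with
  | empty =>
    have bot_mem : ⊥ ∈ U := hne.elim fun u hu ↦ hU bot_le hu
    have rank_zero : ({y | y ∈ U ∧ rk y = (∅ : Finset ℕ).sup id} : Finset P) = {⊥} := by
      ext y
      simp only [sup_empty, Nat.bot_eq_zero, h.rk_eq_zero_iff, mem_filter, mem_univ, true_and,
        mem_singleton, and_iff_right_iff_imp]
      rintro rfl
      exact bot_mem
    rw [rankChains_empty, rank_zero, card_singleton, card_singleton, flagMultinomial_empty]
  | insert s T hlt ih =>
    have s_pos : 0 < s := Nat.pos_of_ne_zero fun hs ↦ hT (hs ▸ mem_insert_self s T)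
    have sup_lt : T.sup id < s := (Finset.sup_lt_iff s_pos).2 hlt
    rw [card_rankChains_insert h.strictMono hU hlt, sup_id_insert_of_lt sup_lt,
      flagMultinomial_insert sup_lt, ← smul_eq_mul, ← sum_const]
    refine sum_congr rfl fun y hy ↦ ?_
    obtain ⟨-, rfl⟩ := (mem_filter.1 hy).2
    have bot_lt : ⊥ < y := bot_lt_iff_ne_bot.2 fun hy ↦ s_pos.ne' (h.rk_eq_zero_iff.2 hy)
    rw [ih (isLowerSet_Iio y) ⟨⊥, bot_lt⟩ fun h0 ↦ hT (mem_insert_of_mem h0), ← h.card_lt sup_lt]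
    rfl

lemma flagF_eq_card_rankChains (h_bot : rk ⊥ = 0) (hT : 0 ∉ T) :
    flagF rk T = #(rankChains rk Set.univ T) := by
  classical
  rw [flagF, Nat.card_eq_fintype_card, Fintype.card_subtype]
  congr 1
  ext c
  rw [mem_rankChains]
  simp only [mem_filter, mem_univ, true_and, Set.subset_univ]
  refine and_congr_right fun _ ↦ and_iff_right_of_imp ?_
  rintro rfl h_mem
  exact hT (h_bot ▸ mem_image_of_mem rk h_mem)

theorem flagF_eq_fvec_mul_flagMultinomial (h : HasBooleanRankCounts rk) (hT : 0 ∉ T) :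
    flagF rk T = fvec rk (T.sup id) * flagMultinomial T := by
  classical
  rw [flagF_eq_card_rankChains h.map_bot hT,
    card_rankChains h isLowerSet_univ Set.univ_nonempty hT]
  simp only [Set.mem_univ, true_and, fvec]

end RankChains

section FlagHVector

open Finset

variable {P : Type*} [Fintype P] [PartialOrder P] [OrderBot P] {rk : P → ℕ} {n : ℕ}
  {S T : Finset ℕ}

theorem flagF_eq_sum_hvec_mul_descentSubsetCount (h : HasBooleanRankCounts rk)
    (hT : T ⊆ Icc 1 n) :
    (flagF rk T : ℤ) =
      ∑ k ∈ range (n + 1), hvec rk n k * descentSubsetCount n T (n - k) := by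
  have zero_notMem : 0 ∉ T := fun h0 ↦ absurd (mem_Icc.1 (hT h0)).1 (by omega)
  have sup_le : T.sup id ≤ n := Finset.sup_le fun t ht ↦ (mem_Icc.1 (hT ht)).2
  rw [flagF_eq_fvec_mul_flagMultinomial h zero_notMem, Nat.cast_mul,
    fvec_eq_sum_hvec_mul_choose sup_le, sum_mul]
  refine sum_congr rfl fun k _ ↦ ?_
  rw [descentSubsetCount_eq_choose_mul sup_le, Nat.cast_mul, mul_assoc]

theorem flagH_eq_sum_hvec_mul_descentCount (h : HasBooleanRankCounts rk) (hS : S ⊆ Icc 1 n) :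
    flagH rk S = ∑ k ∈ range (n + 1), hvec rk n k * descentCount n S (n - k) := by
  refine sum_powerset_neg_one_pow_mul_eq
    (g := fun S ↦ ∑ k ∈ range (n + 1), hvec rk n k * (descentCount n S (n - k) : ℤ))
    fun T hTS ↦ ?_
  rw [flagF_eq_sum_hvec_mul_descentSubsetCount h (hTS.trans hS), sum_comm]
  refine sum_congr rfl fun k _ ↦ ?_
  rw [← sum_descentCount_powerset (hTS.trans hS) (Nat.sub_le n k), Nat.cast_sum, mul_sum]

theorem sum_isolatedSet_flagH {R : Type*} [CommRing R] (h : HasBooleanRankCounts rk) (z : R) :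
    ∑ S ∈ (Icc 2 n).powerset with IsolatedSet S, (flagH rk S : R) * z ^ #S =
      ∑ j ∈ range (n + 1), (hvec rk n (n - j) : R) * (ascentGen z n j + descentGen z n j) := by
  have flagH_mul_pow (S : Finset ℕ) (hS : S ∈ (Icc 2 n).powerset.filter IsolatedSet) :
      (flagH rk S : R) * z ^ #S =
        ∑ k ∈ range (n + 1), (hvec rk n k : R) * (descentCount n S (n - k) * z ^ #S) := by
    have hS_sub : S ⊆ Icc 1 n :=
      (mem_powerset.1 (mem_filter.1 hS).1).trans (Icc_subset_Icc_left one_le_two)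
    rw [flagH_eq_sum_hvec_mul_descentCount h hS_sub, Int.cast_sum, sum_mul]
    refine sum_congr rfl fun k _ ↦ ?_
    rw [Int.cast_mul, Int.cast_natCast, mul_assoc]
  rw [sum_congr rfl flagH_mul_pow, sum_comm, ← sum_range_reflect]
  refine sum_congr rfl fun j hj ↦ ?_
  rw [add_tsub_cancel_right, Nat.sub_sub_self (mem_range_succ_iff.1 hj), ← mul_sum,
    sum_isolatedSet_descentCount]

end FlagHVector

section GammaExpansion

open Finset

lemma exists_re_pos_sq_eq_of_mem_slitPlane {y : ℂ} (hy : y ∈ Complex.slitPlane) :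
    ∃ w : ℂ, 0 < w.re ∧ w ^ 2 = y := by
  refine ⟨y ^ (2⁻¹ : ℂ), ?_, by simp⟩
  rw [Complex.cpow_inv_two_re, Real.sqrt_pos]
  rcases Complex.mem_slitPlane_iff.1 hy with h_re | h_im
  · positivity
  · linarith [neg_lt_of_abs_lt (Complex.abs_re_lt_norm.2 h_im)]

lemma inv_mem_slitPlane {z : ℂ} (hz : z ∈ Complex.slitPlane) : z⁻¹ ∈ Complex.slitPlane := by
  have normSq_pos : 0 < Complex.normSq z := Complex.normSq_pos.2 (Complex.slitPlane_ne_zero hz)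
  rw [Complex.mem_slitPlane_iff, Complex.inv_re, Complex.inv_im]
  exact (Complex.mem_slitPlane_iff.1 hz).imp (div_pos · normSq_pos)
    fun h_im ↦ div_ne_zero (neg_ne_zero.2 h_im) normSq_pos.ne'

lemma add_inv_add_two_mem_slitPlane {z : ℂ} (hz : z.im ≠ 0) : z + z⁻¹ + 2 ∈ Complex.slitPlane := by
  rw [Complex.mem_slitPlane_iff]
  by_cases on_unit_circle : Complex.normSq z = 1
  · left
    have sq_add_sq : z.re ^ 2 + z.im ^ 2 = 1 := by
      rw [← on_unit_circle, Complex.normSq_apply, sq, sq]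
    have neg_one_lt_re : -1 < z.re := by nlinarith [sq_pos_of_ne_zero hz]
    rw [Complex.add_re, Complex.add_re, Complex.inv_re, on_unit_circle, div_one, Complex.re_ofNat]
    linarith
  · right
    have im_eq : (z + z⁻¹ + 2).im = z.im * (1 - (Complex.normSq z)⁻¹) := by
      rw [Complex.add_im, Complex.add_im, Complex.inv_im, Complex.im_ofNat]
      ring
    rw [im_eq]
    exact mul_ne_zero hz (sub_ne_zero.2 fun h ↦ on_unit_circle (inv_eq_one.1 h.symm))

lemma div_one_add_sq_mem_slitPlane {z : ℂ} (hz : z.im ≠ 0) :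
    z / (1 + z) ^ 2 ∈ Complex.slitPlane := by
  have z_ne_zero : z ≠ 0 := fun h ↦ hz (h ▸ Complex.zero_im)
  have inv_eq : z / (1 + z) ^ 2 = (z + z⁻¹ + 2)⁻¹ := by
    rw [← inv_div]
    congr 1
    field_simp
    ring
  rw [inv_eq]
  exact inv_mem_slitPlane (add_inv_add_two_mem_slitPlane hz)

theorem realRooted_sum_smul_X_pow_mul_one_add_X_pow {ι : Type*} {s : Finset ι} {c : ι → ℝ}
    {d : ι → ℕ} {n : ℕ} (hd : ∀ i ∈ s, 2 * d i ≤ n)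
    (h : ∀ y ∈ Complex.slitPlane, ∑ i ∈ s, (c i : ℂ) * y ^ d i ≠ 0) :
    RealRooted (∑ i ∈ s, c i • (X ^ d i * (1 + X) ^ (n - 2 * d i))) := by
  intro z hz
  by_contra him
  have one_add_ne_zero : 1 + z ≠ 0 := fun h0 ↦ him (by simpa using congrArg Complex.im h0)
  have pow_mul_sum_ne_zero :=
    mul_ne_zero (pow_ne_zero n one_add_ne_zero) (h _ (div_one_add_sq_mem_slitPlane him))
  refine pow_mul_sum_ne_zero (Eq.trans ?_ (mem_roots'.1 hz).2)
  rw [Polynomial.map_sum, eval_finsetSum, mul_sum]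
  refine sum_congr rfl fun i hi ↦ ?_
  obtain ⟨m, rfl⟩ := Nat.exists_eq_add_of_le (hd i hi)
  simp only [Polynomial.map_smul, Polynomial.map_mul, Polynomial.map_pow, Polynomial.map_add,
    Polynomial.map_one, map_X, eval_smul, eval_mul, eval_pow, eval_add, eval_one, eval_X,
    smul_eq_mul, Complex.coe_algebraMap, Nat.add_sub_cancel_left, div_pow, pow_add, pow_mul]
  field_simp

end GammaExpansion

open Finset in
theorem statement0_general {P : Type*} [Fintype P] [PartialOrder P] [OrderBot P]
    (n : ℕ) (rk : P → ℕ) (hP : HasBooleanRankCounts rk) (hpos : ∀ k ≤ n, 0 ≤ hvec rk n k) :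
    RealRooted (chowPoly rk n) := by
  refine realRooted_sum_smul_X_pow_mul_one_add_X_pow (fun S hS ↦ ?_) fun y hy ↦ ?_
  · obtain ⟨hS_sub, hS_isolated⟩ := mem_filter.1 hS
    simpa only [Nat.add_sub_cancel] using
      hS_isolated.two_mul_card_le (mem_powerset.1 hS_sub)
  · obtain ⟨w, hw, rfl⟩ := exists_re_pos_sq_eq_of_mem_slitPlane hy
    have hvec_nonneg (j : ℕ) (_ : j ≤ n) : 0 ≤ (hvec rk n (n - j) : ℝ) :=
      Int.cast_nonneg (hpos _ (Nat.sub_le n j))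
    have hvec_ne_zero : (hvec rk n (n - n) : ℝ) ≠ 0 := by
      rw [Nat.sub_self, hvec_zero, hP.fvec_zero]
      norm_num
    have gen_ne_zero := sum_smul_ascentGen_add_descentGen_ne_zero hw hvec_nonneg hvec_ne_zero
    simpa only [Complex.ofReal_intCast, Complex.real_smul, sum_isolatedSet_flagH hP] using
      gen_ne_zero

theorem statement0 {P : Type*} [Fintype P] [PartialOrder P] [OrderBot P]
    (n : ℕ) (rk : P → ℕ)
    (hrk : IsRankFunction rk)
    (hsimp : SimplicialOfRank P n)
    (hpos : ∀ k, 0 ≤ hvec rk n k) :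
    RealRooted (chowPoly rk n) :=
  statement0_general n rk (hasBooleanRankCounts_of_simplicialOfRank hrk hsimp) fun k _ ↦ hpos k
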